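/- Suppose ℓ = 2. Then for every integer j ≥ 1, the alternating sum of the cone cohomology dimensions telescopes: Σ_{k=0}^{j} (−1)^{j−k} b^φ_k = b_j − r_{j−1}. -/

import Mathlib

open LinearMap Module

noncomputable section

namespace ConeMorse

variable (A : ℤ → Type) [∀ i, AddCommGroup (A i)] [∀ i, Module ℝ (A i)]

/-- Transport along an equality of indices. -/
def lcast {m k : ℤ} (h : m = k) : A m →ₗ[ℝ] A k where
  toFun x := h ▸ x
  map_add' x y := by subst h; rfl
  map_smul' c x := by subst h; rfl

variable (d : ∀ i, A i →ₗ[ℝ] A (i + 1))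

/-- Cocycles in degree `i`. -/
def cocycles (i : ℤ) : Submodule ℝ (A i) := ker (d i)

/-- Coboundaries in degree `i`: the image of `d : A^{i-1} → A^i`. -/
def cobound (i : ℤ) : Submodule ℝ (A i) :=
  range ((lcast A (show i - 1 + 1 = i by ring)).comp (d (i - 1)))

/-- Cohomology in degree `i`: cocycles modulo coboundaries. -/
abbrev Hcoh (i : ℤ) :=
  cocycles A d i ⧸ Submodule.comap (cocycles A d i).subtype (cobound A d i)

section OneComplex

variable (ℓ : ℤ) (φ : ∀ i, A i →ₗ[ℝ] A (i + ℓ))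

/-- The cone differential `∂_C (a, b) = (∂ a + φ b, (−1)^{ℓ−1} ∂ b)` on
`Cone^i(φ) = A^i ⊕ A^{i−ℓ+1}`. -/
def coneD (i : ℤ) : (A i × A (i - ℓ + 1)) →ₗ[ℝ] (A (i + 1) × A (i + 1 - ℓ + 1)) :=
  LinearMap.prod
    ((d i).comp (LinearMap.fst ℝ (A i) (A (i - ℓ + 1))) +
      (lcast A (show i - ℓ + 1 + ℓ = i + 1 by ring)).comp
        ((φ (i - ℓ + 1)).comp (LinearMap.snd ℝ (A i) (A (i - ℓ + 1)))))
    (((-1 : ℝ) ^ (ℓ - 1)) •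
      ((lcast A (show i - ℓ + 1 + 1 = i + 1 - ℓ + 1 by ring)).comp
        ((d (i - ℓ + 1)).comp (LinearMap.snd ℝ (A i) (A (i - ℓ + 1))))))

variable [∀ i, FiniteDimensional ℝ (A i)]

/-- `m_k`: the dimension of the cochain group in degree `k`. -/
def mnum (k : ℤ) : ℕ := finrank ℝ (A k)

/-- `b_k`: the dimension of the cohomology in degree `k`. -/
def bnum (k : ℤ) : ℕ := finrank ℝ (Hcoh A d k)

/-- `v_k`: the rank of `φ : A^k → A^{k+ℓ}`. -/
def vnum (k : ℤ) : ℕ := finrank ℝ (range (φ k))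

/-- `r_k`: the rank of the induced map `[φ] : H^k → H^{k+ℓ}`, computed as the dimension of
`φ(Z^k)/(φ(Z^k) ∩ B^{k+ℓ})`. -/
def rnum (k : ℤ) : ℕ :=
  finrank ℝ ((Submodule.map (φ k) (cocycles A d k)) ⧸
    Submodule.comap (Submodule.map (φ k) (cocycles A d k)).subtype (cobound A d (k + ℓ)))

/-- `b^φ_k`: the dimension of the cone cohomology in degree `k`. -/
def bphi (k : ℤ) : ℕ :=
  finrank ℝ (Hcoh (fun i => A i × A (i - ℓ + 1)) (coneD A d ℓ φ) k)

end OneComplex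

end ConeMorse

open ConeMorse

/-!
The cone differential is block triangular, with diagonal blocks `∂` and `±∂` and off-diagonal block
`φ`, so its rank exceeds `rank ∂ + rank ∂` by exactly the rank of `[φ]`. Rank–nullity then gives
`b^φ_k = (b_k - r_{k-ℓ}) + (b_{k-ℓ+1} - r_{k-ℓ+1})`. For `ℓ = 2`, with `a_k = b_k - r_{k-1}`, this
reads `b^φ_k = a_k + a_{k-1}`.
-/

namespace ConeMorse

section BlockTriangular

variable {K U V X Y : Type*} [Semiring K]
  [AddCommMonoid U] [Module K U] [AddCommMonoid V] [Module K V]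
  [AddCommMonoid X] [Module K X] [AddCommMonoid Y] [Module K Y]

theorem map_snd_range_prod_comp_snd (f : U × V →ₗ[K] X) (h : V →ₗ[K] Y) :
    (range (f.prod (h.comp (snd K U V)))).map (snd K X Y) = range h := by
  rw [← range_comp, snd_prod, range_comp_of_range_eq_top _ Submodule.range_snd]

theorem range_coprod_prod_inf_ker_snd (f : U →ₗ[K] X) (g : V →ₗ[K] X) (h : V →ₗ[K] Y) :
    range ((f.coprod g).prod (h.comp (snd K U V))) ⊓ ker (snd K X Y) =
      (range f ⊔ (ker h).map g).map (inl K X Y) := by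
  ext ⟨x, y⟩
  simp only [Submodule.mem_inf, mem_range, mem_ker, Submodule.mem_map, Submodule.mem_sup]
  constructor
  · rintro ⟨⟨⟨u, v⟩, huv⟩, hy⟩
    obtain ⟨rfl, rfl⟩ := Prod.mk.inj huv
    exact ⟨f u + g v, ⟨f u, ⟨u, rfl⟩, g v, ⟨v, hy, rfl⟩, rfl⟩, Prod.ext rfl hy.symm⟩
  · rintro ⟨_, ⟨_, ⟨u, rfl⟩, _, ⟨v, hv, rfl⟩, rfl⟩, hxy⟩
    obtain ⟨rfl, rfl⟩ := Prod.mk.inj hxy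
    exact ⟨⟨(u, v), Prod.ext rfl hv⟩, rfl⟩

end BlockTriangular

section Finrank

variable {K U V X Y : Type*} [DivisionRing K]
  [AddCommGroup U] [Module K U] [AddCommGroup V] [Module K V]
  [AddCommGroup X] [Module K X] [AddCommGroup Y] [Module K Y]

theorem finrank_quotient_comap_subtype_add_finrank [FiniteDimensional K V]
    (P Q : Submodule K V) :
    finrank K (P ⧸ Q.comap P.subtype) + finrank K Q = finrank K (Q ⊔ P : Submodule K V) := by
  have h_inf : finrank K (Q.comap P.subtype) = finrank K (Q ⊓ P : Submodule K V) := by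
    rw [← Submodule.finrank_map_subtype_eq, Submodule.map_comap_subtype, inf_comm]
  have h_quotient := Submodule.finrank_quotient_add_finrank (Q.comap P.subtype)
  have h_sup := Submodule.finrank_sup_add_finrank_inf_eq Q P
  omega

theorem finrank_map_add_finrank_inf_ker (f : V →ₗ[K] X) (P : Submodule K V)
    [FiniteDimensional K P] :
    finrank K (P.map f) + finrank K (P ⊓ ker f : Submodule K V) = finrank K P := by
  rw [← finrank_range_add_finrank_ker (f.domRestrict P), range_domRestrict, ker_domRestrict,
    ← Submodule.finrank_map_subtype_eq, Submodule.map_comap_subtype]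

theorem finrank_range_coprod_prod [FiniteDimensional K X] [FiniteDimensional K Y]
    (f : U →ₗ[K] X) (g : V →ₗ[K] X) (h : V →ₗ[K] Y) :
    finrank K (range ((f.coprod g).prod (h.comp (snd K U V)))) =
      finrank K (range f ⊔ (ker h).map g : Submodule K X) + finrank K (range h) := by
  rw [← finrank_map_add_finrank_inf_ker (snd K X Y), map_snd_range_prod_comp_snd,
    range_coprod_prod_inf_ker_snd, add_comm,
    ← (Submodule.equivMapOfInjective (inl K X Y) inl_injective _).finrank_eq]

end Finrank

theorem sum_range_alternating_add_pred {R : Type*} [Ring R] (a : ℤ → R) (j : ℕ) :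
    ∑ k ∈ Finset.range (j + 1), (-1) ^ (j - k) * (a k + a (k - 1)) =
      a j + (-1) ^ j * a (-1) := by
  induction j with
  | zero => simp
  | succ j ih =>
    have sign_flip : ∀ k ∈ Finset.range (j + 1),
        (-1) ^ (j + 1 - k) * (a k + a (k - 1)) = -((-1) ^ (j - k) * (a k + a (k - 1))) := by
      intro k hk
      rw [Nat.succ_sub (Finset.mem_range_succ_iff.mp hk), pow_succ']
      simp
    rw [Finset.sum_range_succ, Finset.sum_congr rfl sign_flip, Finset.sum_neg_distrib, ih,
      pow_succ']
    push_cast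
    simp only [Nat.sub_self, pow_zero, one_mul, add_sub_cancel_right, neg_mul]
    abel

variable {C : ℤ → Type} [∀ i, AddCommGroup (C i)] [∀ i, Module ℝ (C i)]

section Transport

theorem lcast_lcast {p q r : ℤ} (hpq : p = q) (hqr : q = r) (x : C p) :
    lcast C hqr (lcast C hpq x) = lcast C (hpq.trans hqr) x := by
  subst hpq hqr; rfl

theorem apply_lcast {s : ℤ} (f : ∀ i, C i →ₗ[ℝ] C (i + s)) {p q : ℤ} (h : p = q) (x : C p) :
    f q (lcast C h x) = lcast C (congrArg (· + s) h) (f p x) := by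
  subst h; rfl

variable {V : Type*} [AddCommGroup V] [Module ℝ V]

theorem finrank_range_lcast_comp {p q : ℤ} (h : p = q) (f : V →ₗ[ℝ] C p) :
    finrank ℝ (range ((lcast C h).comp f)) = finrank ℝ (range f) := by
  subst h; rfl

theorem ker_lcast_comp {p q : ℤ} (h : p = q) (f : V →ₗ[ℝ] C p) :
    ker ((lcast C h).comp f) = ker f := by
  subst h; rfl

end Transport

variable {d : ∀ i, C i →ₗ[ℝ] C (i + 1)}

section Cohomology

theorem cobound_add_one (i : ℤ) : cobound C d (i + 1) = range (d i) := by
  have cobound_eq : ∀ (p : ℤ) (h : p + 1 = i + 1),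
      range ((lcast C h).comp (d p)) = range (d i) := by
    intro p h
    obtain rfl : p = i := add_right_cancel h
    rfl
  exact cobound_eq _ _

theorem finrank_cobound (k : ℤ) : finrank ℝ (cobound C d k) = finrank ℝ (range (d (k - 1))) :=
  finrank_range_lcast_comp _ _

theorem cobound_le_cocycles (hd : ∀ i, (d (i + 1)).comp (d i) = 0) (k : ℤ) :
    cobound C d k ≤ cocycles C d k := by
  rintro _ ⟨x, rfl⟩
  rw [cocycles, mem_ker, comp_apply, apply_lcast, ← comp_apply (d (k - 1 + 1)), hd,
    LinearMap.zero_apply, map_zero]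

theorem finrank_Hcoh_add_finrank_range [∀ i, FiniteDimensional ℝ (C i)]
    (hd : ∀ i, (d (i + 1)).comp (d i) = 0) (k : ℤ) :
    finrank ℝ (Hcoh C d k) + finrank ℝ (range (d (k - 1))) + finrank ℝ (range (d k)) =
      finrank ℝ (C k) := by
  rw [← finrank_cobound, finrank_quotient_comap_subtype_add_finrank,
    sup_eq_right.mpr (cobound_le_cocycles hd k), add_comm, cocycles,
    finrank_range_add_finrank_ker]

theorem bnum_eq_zero (k : ℤ) [Subsingleton (C k)] : bnum C d k = 0 :=
  finrank_zero_of_subsingleton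

end Cohomology

section Cone

variable {ℓ : ℤ} {φ : ∀ i, C i →ₗ[ℝ] C (i + ℓ)}

theorem rnum_eq_zero (k : ℤ) [Subsingleton (C k)] : rnum C d ℓ φ k = 0 := by
  have : Subsingleton ((cocycles C d k).map (φ k)) := by
    rw [Submodule.eq_bot_of_subsingleton (p := cocycles C d k), Submodule.map_bot]
    infer_instance
  exact finrank_zero_of_subsingleton

theorem finrank_cobound_sup_map_cocycles [∀ i, FiniteDimensional ℝ (C i)]
    {p q : ℤ} (h : p + ℓ = q) :
    finrank ℝ (cobound C d q ⊔ (cocycles C d p).map ((lcast C h).comp (φ p)) :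
      Submodule ℝ (C q)) = finrank ℝ (cobound C d q) + rnum C d ℓ φ p := by
  subst h
  exact (finrank_quotient_comap_subtype_add_finrank _ _).symm.trans (add_comm _ _)

theorem coneD_eq_coprod_prod (i : ℤ) :
    coneD C d ℓ φ i =
      ((d i).coprod ((lcast C (show i - ℓ + 1 + ℓ = i + 1 by ring)).comp (φ (i - ℓ + 1)))).prod
        (((lcast C (show i - ℓ + 1 + 1 = i + 1 - ℓ + 1 by ring)).comp
          ((-1 : ℝ) ^ (ℓ - 1) • d (i - ℓ + 1))).comp (snd ℝ (C i) (C (i - ℓ + 1)))) := by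
  ext <;> simp [coneD]

theorem finrank_range_coneD [∀ i, FiniteDimensional ℝ (C i)] (i : ℤ) :
    finrank ℝ (range (coneD C d ℓ φ i)) =
      finrank ℝ (range (d i)) + rnum C d ℓ φ (i - ℓ + 1) +
        finrank ℝ (range (d (i - ℓ + 1))) := by
  have sign_ne_zero : (-1 : ℝ) ^ (ℓ - 1) ≠ 0 := zpow_ne_zero _ (by norm_num)
  rw [coneD_eq_coprod_prod, finrank_range_coprod_prod, ker_lcast_comp, finrank_range_lcast_comp,
    ker_smul _ _ sign_ne_zero, range_smul _ _ sign_ne_zero, ← cobound_add_one, ← cocycles,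
    finrank_cobound_sup_map_cocycles]

theorem coneD_comp_coneD (hd : ∀ i, (d (i + 1)).comp (d i) = 0)
    (hφ : ∀ i, (d (i + ℓ)).comp (φ i) =
      ((-1 : ℝ) ^ ℓ) • (lcast C (show i + 1 + ℓ = i + ℓ + 1 by ring)).comp
        ((φ (i + 1)).comp (d i))) (i : ℤ) :
    (coneD C d ℓ φ (i + 1)).comp (coneD C d ℓ φ i) = 0 := by
  have d_d (i x) : d (i + 1) (d i x) = 0 := LinearMap.congr_fun (hd i) x
  have d_φ (i x) : d (i + ℓ) (φ i x) =
      (-1 : ℝ) ^ ℓ • lcast C (show i + 1 + ℓ = i + ℓ + 1 by ring) (φ (i + 1) (d i x)) :=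
    LinearMap.congr_fun (hφ i) x
  have sign_succ : (-1 : ℝ) ^ ℓ = -(-1) ^ (ℓ - 1) := by
    rw [zpow_sub_one₀ (by norm_num)]; simp
  ext x <;>
    simp [coneD, d_d, d_φ, apply_lcast, lcast_lcast, sign_succ]

theorem bphi_eq [∀ i, FiniteDimensional ℝ (C i)] (hd : ∀ i, (d (i + 1)).comp (d i) = 0)
    (hφ : ∀ i, (d (i + ℓ)).comp (φ i) =
      ((-1 : ℝ) ^ ℓ) • (lcast C (show i + 1 + ℓ = i + ℓ + 1 by ring)).comp
        ((φ (i + 1)).comp (d i))) (k : ℤ) :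
    (bphi C d ℓ φ k : ℤ) =
      ((bnum C d k : ℤ) - rnum C d ℓ φ (k - ℓ)) +
        ((bnum C d (k - ℓ + 1) : ℤ) - rnum C d ℓ φ (k - ℓ + 1)) := by
  have dim_cone := finrank_Hcoh_add_finrank_range (coneD_comp_coneD hd hφ) k
  have dim_k := finrank_Hcoh_add_finrank_range hd k
  have dim_shift := finrank_Hcoh_add_finrank_range hd (k - ℓ + 1)
  have rank_pred : finrank ℝ (range (coneD C d ℓ φ (k - 1))) =
      finrank ℝ (range (d (k - 1))) + rnum C d ℓ φ (k - ℓ) + finrank ℝ (range (d (k - ℓ))) := by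
    rw [finrank_range_coneD, show k - 1 - ℓ + 1 = k - ℓ by ring]
  rw [add_sub_cancel_right] at dim_shift
  rw [rank_pred, finrank_range_coneD, finrank_prod] at dim_cone
  unfold bphi bnum
  omega

end Cone

end ConeMorse

theorem alternating_sum_telescopes_two_form_general
    {C : ℤ → Type} [∀ i, AddCommGroup (C i)] [∀ i, Module ℝ (C i)]
    [∀ i, FiniteDimensional ℝ (C i)] (hC : ∀ i < 0, Subsingleton (C i))
    {d : ∀ i, C i →ₗ[ℝ] C (i + 1)} (hd : ∀ i, (d (i + 1)).comp (d i) = 0)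
    {φ : ∀ i, C i →ₗ[ℝ] C (i + 2)}
    (hφ : ∀ i, (d (i + 2)).comp (φ i) =
      (lcast C (show i + 1 + 2 = i + 2 + 1 by ring)).comp ((φ (i + 1)).comp (d i))) (j : ℕ) :
    ∑ k ∈ Finset.range (j + 1), (-1 : ℤ) ^ (j - k) * (bphi C d 2 φ k : ℤ) =
      (bnum C d j : ℤ) - rnum C d 2 φ (j - 1) := by
  let a (k : ℤ) : ℤ := bnum C d k - rnum C d 2 φ (k - 1)
  have bphi_eq_add (k : ℤ) : (bphi C d 2 φ k : ℤ) = a k + a (k - 1) := by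
    rw [bphi_eq hd (by simpa using hφ), show k - 2 + 1 = k - 1 by ring]
    simp only [a, show k - 1 - 1 = k - 2 by ring]
    ring
  have a_neg_one : a (-1) = 0 := by
    have := hC (-1) (by norm_num)
    have := hC (-1 - 1) (by norm_num)
    simp only [a, bnum_eq_zero, rnum_eq_zero, Nat.cast_zero, sub_zero]
  simp only [bphi_eq_add, sum_range_alternating_add_pred, a_neg_one, mul_zero, add_zero]
  rfl

/-- STATEMENT 15: if `ℓ = 2`, then for every integer `j ≥ 1`, the alternating sum of the
cone cohomology dimensions telescopes: `Σ_{k=0}^{j} (−1)^{j−k} b^φ_k = b_j − r_{j−1}`. -/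
theorem alternating_sum_telescopes_two_form
    (n ℓ : ℤ) (hn : 0 ≤ n) (hℓ : 1 ≤ ℓ)
    (C : ℤ → Type) [∀ i, AddCommGroup (C i)] [∀ i, Module ℝ (C i)]
    [∀ i, FiniteDimensional ℝ (C i)]
    (hC : ∀ i, i < 0 ∨ n < i → Subsingleton (C i))
    (d : ∀ i, C i →ₗ[ℝ] C (i + 1))
    (hd : ∀ i, (d (i + 1)).comp (d i) = 0)
    (φ : ∀ i, C i →ₗ[ℝ] C (i + ℓ))
    (hφ : ∀ i, (d (i + ℓ)).comp (φ i) =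
      ((-1 : ℝ) ^ ℓ) • (lcast C (show i + 1 + ℓ = i + ℓ + 1 by ring)).comp
        ((φ (i + 1)).comp (d i)))
    (hl2 : ℓ = 2) :
    ∀ j : ℕ, 1 ≤ j →
      ∑ k ∈ Finset.range (j + 1), (-1 : ℤ) ^ (j - k) * (bphi C d ℓ φ (k : ℤ) : ℤ) =
        (bnum C d (j : ℤ) : ℤ) - rnum C d ℓ φ ((j : ℤ) - 1) := by
  subst hl2
  exact fun j _ ↦ alternating_sum_telescopes_two_form_general (fun i hi ↦ hC i (.inl hi)) hd
    (by simpa using hφ) j
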